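/- arXiv:math/0203179 — 2 statements merged into one kernel-verified Lean document; each statement's English description precedes it below -/
import Mathlib

section
/- Let (G, s) be an abelian group with a distinguished element s of order at most 2. Define A_1(G,s) as the abelian group generated by symbols Y[z_1,z_2,z_3] with z_i ∈ G, modulo: cyclic invariance Y[z_1,z_2,z_3] = Y[z_2,z_3,z_1]; antisymmetry Y[z_1,z_2,z_3] = -Y[z_2,z_1,z_3]; multilinearity Y[z_0+z_1,z_2,z_3] = Y[z_0,z_2,z_3] + Y[z_1,z_2,z_3]; and the slide relation Y[z_1,z_1,z_2] = Y[s,z_1,z_2]. Then when s = 0, A_1(G,0) is isomorphic to Λ^3 G, via Y[z_1,z_2,z_3] ↦ z_1 ∧ z_2 ∧ z_3. -/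
/-- The relations defining `A_1(G,s)`: cyclic invariance, antisymmetry, multilinearity,
and the slide relation `Y[z,z,w] = Y[s,z,w]`. -/
def YRel (G : Type*) [AddCommGroup G] (s : G) : Set (FreeAbelianGroup (G × G × G)) :=
  {x | ∃ z₁ z₂ z₃ : G, x = FreeAbelianGroup.of (z₁, z₂, z₃)
        - FreeAbelianGroup.of (z₂, z₃, z₁)} ∪
  {x | ∃ z₁ z₂ z₃ : G, x = FreeAbelianGroup.of (z₁, z₂, z₃)
        + FreeAbelianGroup.of (z₂, z₁, z₃)} ∪
  {x | ∃ z₀ z₁ z₂ z₃ : G, x = FreeAbelianGroup.of (z₀ + z₁, z₂, z₃)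
        - FreeAbelianGroup.of (z₀, z₂, z₃) - FreeAbelianGroup.of (z₁, z₂, z₃)} ∪
  {x | ∃ z₁ z₂ : G, x = FreeAbelianGroup.of (z₁, z₁, z₂)
        - FreeAbelianGroup.of (s, z₁, z₂)}

/-- The abelian group `A_1(G,s)`, generated by symbols `Y[z₁,z₂,z₃]` (`zᵢ ∈ G`) modulo
cyclic invariance, antisymmetry, multilinearity and the slide relation. -/
def A1 (G : Type*) [AddCommGroup G] (s : G) :=
  FreeAbelianGroup (G × G × G) ⧸ AddSubgroup.closure (YRel G s)

instance (G : Type*) [AddCommGroup G] (s : G) : AddCommGroup (A1 G s) :=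
  QuotientAddGroup.Quotient.addCommGroup _

/-- The generator `Y[z₁,z₂,z₃]` of `A_1(G,s)`. -/
def Ygen {G : Type*} [AddCommGroup G] (s : G) (z₁ z₂ z₃ : G) : A1 G s :=
  QuotientAddGroup.mk' _ (FreeAbelianGroup.of (z₁, z₂, z₃))

/-- The wedge product `a ∧ b ∧ c` as an element of the third exterior power. -/
noncomputable def wedge3 {R M : Type*} [CommRing R] [AddCommGroup M] [Module R M]
    (a b c : M) : ⋀[R]^3 M :=
  ⟨ExteriorAlgebra.ιMulti R 3 ![a, b, c],
    ExteriorAlgebra.ιMulti_range R 3 ⟨![a, b, c], rfl⟩⟩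


section A1Aux

variable {G : Type*} [AddCommGroup G]

theorem A1aux_cyc (s a b c : G) : Ygen s a b c = Ygen s b c a := by
  have h : FreeAbelianGroup.of (a, b, c) - FreeAbelianGroup.of (b, c, a)
      ∈ AddSubgroup.closure (YRel G s) :=
    AddSubgroup.subset_closure (Or.inl (Or.inl (Or.inl ⟨a, b, c, rfl⟩)))
  have h2 := (QuotientAddGroup.eq_zero_iff _).2 h
  exact sub_eq_zero.1 h2

theorem A1aux_add₁ (s a a' b c : G) :
    Ygen s (a + a') b c = Ygen s a b c + Ygen s a' b c := by
  have h : FreeAbelianGroup.of (a + a', b, c) - FreeAbelianGroup.of (a, b, c)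
      - FreeAbelianGroup.of (a', b, c) ∈ AddSubgroup.closure (YRel G s) :=
    AddSubgroup.subset_closure (Or.inl (Or.inr ⟨a, a', b, c, rfl⟩))
  have h2 := (QuotientAddGroup.eq_zero_iff _).2 h
  have h3 : Ygen s (a + a') b c - Ygen s a b c - Ygen s a' b c = 0 := h2
  rw [sub_sub] at h3
  exact sub_eq_zero.1 h3

theorem A1aux_slide (s a b : G) : Ygen s a a b = Ygen s s a b := by
  have h : FreeAbelianGroup.of (a, a, b) - FreeAbelianGroup.of (s, a, b)
      ∈ AddSubgroup.closure (YRel G s) :=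
    AddSubgroup.subset_closure (Or.inr ⟨a, b, rfl⟩)
  have h2 := (QuotientAddGroup.eq_zero_iff _).2 h
  exact sub_eq_zero.1 h2

theorem A1aux_add₂ (s a b b' c : G) :
    Ygen s a (b + b') c = Ygen s a b c + Ygen s a b' c := by
  rw [A1aux_cyc, A1aux_add₁, ← A1aux_cyc s a b c, ← A1aux_cyc s a b' c]

theorem A1aux_add₃ (s a b c c' : G) :
    Ygen s a b (c + c') = Ygen s a b c + Ygen s a b c' := by
  rw [← A1aux_cyc, A1aux_add₁, A1aux_cyc, A1aux_cyc s c']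

theorem A1aux_zsmul₁ (s : G) (n : ℤ) (a b c : G) :
    Ygen s (n • a) b c = n • Ygen s a b c :=
  (AddMonoidHom.mk' (fun a => Ygen s a b c) (fun a a' => A1aux_add₁ s a a' b c)).map_zsmul n a

theorem A1aux_zsmul₂ (s : G) (n : ℤ) (a b c : G) :
    Ygen s a (n • b) c = n • Ygen s a b c :=
  (AddMonoidHom.mk' (fun b => Ygen s a b c) (fun b b' => A1aux_add₂ s a b b' c)).map_zsmul n b

theorem A1aux_zsmul₃ (s : G) (n : ℤ) (a b c : G) :
    Ygen s a b (n • c) = n • Ygen s a b c :=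
  (AddMonoidHom.mk' (fun c => Ygen s a b c) (fun c c' => A1aux_add₃ s a b c c')).map_zsmul n c

theorem A1aux_diag (a b : G) : Ygen (0 : G) a a b = 0 := by
  rw [A1aux_slide]
  exact (AddMonoidHom.mk' (fun x => Ygen (0 : G) x a b)
    (fun x x' => A1aux_add₁ 0 x x' a b)).map_zero

/-- The alternating map `(a, b, c) ↦ Y[a,b,c]`. -/
noncomputable def A1aux_alt (G : Type*) [AddCommGroup G] : G [⋀^Fin 3]→ₗ[ℤ] A1 G (0 : G) where
  toFun v := Ygen 0 (v 0) (v 1) (v 2)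
  map_update_add' := by
    intro inst v i x y
    obtain rfl : inst = instDecidableEqFin 3 := Subsingleton.elim _ _
    fin_cases i <;>
      simp [A1aux_add₁, A1aux_add₂, A1aux_add₃]
  map_update_smul' := by
    intro inst v i n x
    obtain rfl : inst = instDecidableEqFin 3 := Subsingleton.elim _ _
    fin_cases i <;>
      simp [A1aux_zsmul₁, A1aux_zsmul₂, A1aux_zsmul₃]
  map_eq_zero_of_eq' := by
    have key : ∀ a b c : G, (a = b ∨ b = c ∨ a = c) → Ygen (0 : G) a b c = 0 := by
      rintro a b c (rfl | rfl | rfl)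
      · exact A1aux_diag _ _
      · rw [A1aux_cyc]; exact A1aux_diag _ _
      · rw [← A1aux_cyc]; exact A1aux_diag _ _
    intro v i j h hij
    apply key
    fin_cases i <;> fin_cases j <;> simp_all

theorem A1aux_wedge_eq (a b c : G) :
    wedge3 a b c = exteriorPower.ιMulti ℤ 3 ![a, b, c] := rfl

theorem A1aux_wedge_add (a a' b c : G) :
    (wedge3 (a + a') b c : ⋀[ℤ]^3 G) = wedge3 a b c + wedge3 a' b c := by
  have h := (exteriorPower.ιMulti ℤ 3 (M := G)).map_update_add ![0, b, c] 0 a a'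
  have e : ∀ x : G, Function.update ![0, b, c] 0 x = ![x, b, c] := by
    intro x
    ext i
    fin_cases i <;> rfl
  rw [e, e, e] at h
  exact h

theorem A1aux_wedge_swap (a b c : G) :
    (wedge3 b a c : ⋀[ℤ]^3 G) = - wedge3 a b c := by
  have h := (exteriorPower.ιMulti ℤ 3 (M := G)).map_swap ![a, b, c]
    (i := 0) (j := 1) (by decide)
  rw [A1aux_wedge_eq, A1aux_wedge_eq, ← h]
  congr 1
  ext i
  fin_cases i <;> rfl

theorem A1aux_wedge_swap' (a b c : G) :
    (wedge3 a c b : ⋀[ℤ]^3 G) = - wedge3 a b c := by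
  have h := (exteriorPower.ιMulti ℤ 3 (M := G)).map_swap ![a, b, c]
    (i := 1) (j := 2) (by decide)
  rw [A1aux_wedge_eq, A1aux_wedge_eq, ← h]
  congr 1
  ext i
  fin_cases i <;> rfl

theorem A1aux_wedge_diag (a b : G) : (wedge3 a a b : ⋀[ℤ]^3 G) = 0 :=
  (exteriorPower.ιMulti ℤ 3 (M := G)).map_eq_zero_of_eq ![a, a, b]
    (i := 0) (j := 1) rfl (by decide)

theorem A1aux_wedge_zero (a b : G) : (wedge3 0 a b : ⋀[ℤ]^3 G) = 0 :=
  (exteriorPower.ιMulti ℤ 3 (M := G)).map_coord_zero (m := ![0, a, b]) 0 rfl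

/-- The homomorphism `A_1(G,0) → Λ³G`. -/
noncomputable def A1aux_hom (G : Type*) [AddCommGroup G] : A1 G (0 : G) →+ ⋀[ℤ]^3 G :=
  QuotientAddGroup.lift _
    (FreeAbelianGroup.lift (fun p : G × G × G => (wedge3 p.1 p.2.1 p.2.2 : ⋀[ℤ]^3 G))) (by
      rw [AddSubgroup.closure_le]
      rintro x (((⟨a, b, c, rfl⟩ | ⟨a, b, c, rfl⟩) | ⟨a, a', b, c, rfl⟩) | ⟨a, b, rfl⟩) <;>
        simp only [SetLike.mem_coe, AddMonoidHom.mem_ker, map_sub, map_add,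
          FreeAbelianGroup.lift_apply_of]
      · rw [A1aux_wedge_swap' b a c, A1aux_wedge_swap a b c]; simp
      · rw [A1aux_wedge_swap a b c]; simp
      · rw [A1aux_wedge_add]; abel
      · rw [A1aux_wedge_diag, A1aux_wedge_zero]; simp)

theorem A1aux_hom_Ygen (a b c : G) : A1aux_hom G (Ygen 0 a b c) = wedge3 a b c := by
  change FreeAbelianGroup.lift _ (FreeAbelianGroup.of (a, b, c)) = _
  rw [FreeAbelianGroup.lift_apply_of]

/-- The inverse homomorphism `Λ³G → A_1(G,0)`. -/
noncomputable def A1aux_inv (G : Type*) [AddCommGroup G] : ⋀[ℤ]^3 G →ₗ[ℤ] A1 G (0 : G) :=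
  exteriorPower.alternatingMapLinearEquiv (A1aux_alt G)

theorem A1aux_inv_ι (v : Fin 3 → G) :
    A1aux_inv G (exteriorPower.ιMulti ℤ 3 v) = Ygen 0 (v 0) (v 1) (v 2) :=
  exteriorPower.alternatingMapLinearEquiv_apply_ιMulti _ _

theorem A1aux_left (x : A1 G (0 : G)) : A1aux_inv G (A1aux_hom G x) = x := by
  have h : ((A1aux_inv G).toAddMonoidHom.comp (A1aux_hom G)).comp
      (QuotientAddGroup.mk' (AddSubgroup.closure (YRel G 0)))
      = (QuotientAddGroup.mk' (AddSubgroup.closure (YRel G 0)) :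
        FreeAbelianGroup (G × G × G) →+ A1 G (0 : G)) := by
    apply FreeAbelianGroup.lift_ext
    rintro ⟨a, b, c⟩
    change A1aux_inv G (A1aux_hom G (Ygen 0 a b c)) = Ygen 0 a b c
    rw [A1aux_hom_Ygen, A1aux_wedge_eq, A1aux_inv_ι]
    rfl
  obtain ⟨y, rfl⟩ := QuotientAddGroup.mk'_surjective _ x
  exact DFunLike.congr_fun h y

theorem A1aux_right (x : ⋀[ℤ]^3 G) : A1aux_hom G (A1aux_inv G x) = x := by
  have h : (A1aux_hom G).toIntLinearMap ∘ₗ A1aux_inv G = LinearMap.id := by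
    apply exteriorPower.linearMap_ext
    ext1 v
    change A1aux_hom G (A1aux_inv G (exteriorPower.ιMulti ℤ 3 v)) = exteriorPower.ιMulti ℤ 3 v
    rw [A1aux_inv_ι, A1aux_hom_Ygen, A1aux_wedge_eq]
    congr 1
    ext i
    fin_cases i <;> rfl
  exact DFunLike.congr_fun h x

end A1Aux

/-- For `(G,s)` with `s = 0`, the group `A_1(G,0)` is isomorphic to `Λ³G` (the third exterior
power of `G` over `ℤ`), via `Y[z₁,z₂,z₃] ↦ z₁ ∧ z₂ ∧ z₃`. -/
theorem A1_of_zero_iso_lambda3 (G : Type*) [AddCommGroup G] :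
    ∃ e : A1 G (0 : G) ≃+ ⋀[ℤ]^3 G,
      ∀ z₁ z₂ z₃ : G, e (Ygen (0 : G) z₁ z₂ z₃) = wedge3 z₁ z₂ z₃ :=
  ⟨{ A1aux_hom G with
      invFun := A1aux_inv G
      left_inv := A1aux_left
      right_inv := A1aux_right }, A1aux_hom_Ygen⟩
end

section
/- Let H = Z^{2g} and define ν : Λ^3 H → H ⊗ L_2(H) by ν(x ∧ y ∧ z) = x ⊗ [y,z] + y ⊗ [z,x] + z ⊗ [x,y], where L_2(H) is the degree-2 part of the free Lie ring on H. Then ν is well-defined, injective, and its composition with the bracketing map H ⊗ L_2(H) → L_3(H), h ⊗ u ↦ [h,u], is zero; that is, the sequence 0 → Λ^3 H → H ⊗ L_2(H) → L_3(H) is exact at the first two spots. -/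
/-- `H = ℤ^{2g}` with basis indexed by `Fin g ⊕ Fin g` (`Sum.inl i = x_i`, `Sum.inr i = y_i`). -/
abbrev Hgrp (g : ℕ) := Fin g ⊕ Fin g → ℤ

/-- The symplectic intersection form `•` on `H`. -/
def isym (g : ℕ) (a b : Hgrp g) : ℤ :=
  ∑ i : Fin g, (a (Sum.inl i) * b (Sum.inr i) - a (Sum.inr i) * b (Sum.inl i))

open scoped TensorProduct

/-- The free Lie ring over `ℤ` on generators indexed by `Fin g ⊕ Fin g`. -/
abbrev FreeLie (g : ℕ) := FreeLieAlgebra ℤ (Fin g ⊕ Fin g)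

/-- The embedding of `H = ℤ^{2g}` onto the degree-1 part of the free Lie ring,
sending the `j`-th basis vector to the `j`-th generator. -/
noncomputable def linH (g : ℕ) : Hgrp g →ₗ[ℤ] FreeLie g :=
  (Pi.basisFun ℤ (Fin g ⊕ Fin g)).constr ℤ (fun j => FreeLieAlgebra.of ℤ j)

/-- The wedge product `a ∧ b` as an element of the second exterior power. -/
noncomputable def wedge2 {R M : Type*} [CommRing R] [AddCommGroup M] [Module R M]
    (a b : M) : ⋀[R]^2 M :=
  ⟨ExteriorAlgebra.ιMulti R 2 ![a, b],
    ExteriorAlgebra.ιMulti_range R 2 ⟨![a, b], rfl⟩⟩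

section Aux

open ExteriorAlgebra

variable {M N : Type*} [AddCommGroup M] [AddCommGroup N]

lemma coe_wedge2 (a b : M) : ((wedge2 a b : ⋀[ℤ]^2 M) : ExteriorAlgebra ℤ M) = ι ℤ a * ι ℤ b := by
  simp [wedge2, ExteriorAlgebra.ιMulti_apply]

lemma coe_wedge3 (a b c : M) :
    ((wedge3 a b c : ⋀[ℤ]^3 M) : ExteriorAlgebra ℤ M) = ι ℤ a * (ι ℤ b * ι ℤ c) := by
  simp [wedge3, ExteriorAlgebra.ιMulti_apply]

/-- `wedge2` as a bilinear map. -/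
noncomputable def wedgeB (M : Type*) [AddCommGroup M] : M →ₗ[ℤ] M →ₗ[ℤ] ⋀[ℤ]^2 M :=
  LinearMap.mk₂ ℤ wedge2
    (fun a b c => Subtype.ext (by simp [coe_wedge2, add_mul]))
    (fun r a b => Subtype.ext (by simp [coe_wedge2, mul_assoc]))
    (fun a b c => Subtype.ext (by simp [coe_wedge2, mul_add]))
    (fun r a b => Subtype.ext (by
      simp only [coe_wedge2, map_smul, Submodule.coe_smul, mul_smul_comm]))

lemma wedgeB_apply (a b : M) : wedgeB M a b = wedge2 a b := rfl

lemma wedge2_self (a : M) : (wedge2 a a : ⋀[ℤ]^2 M) = 0 :=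
  Subtype.ext (by simp [coe_wedge2])

lemma wedge2_swap (a b : M) : (wedge2 a b : ⋀[ℤ]^2 M) = - wedge2 b a :=
  Subtype.ext (by
    simp only [coe_wedge2, Submodule.coe_neg]
    exact eq_neg_of_add_eq_zero_left (ExteriorAlgebra.ι_add_mul_swap a b))

/-- An alternating bilinear map as an `AlternatingMap`. -/
def alt2 (f : M →ₗ[ℤ] M →ₗ[ℤ] N) (hf : ∀ x, f x x = 0) : M [⋀^Fin 2]→ₗ[ℤ] N where
  toFun v := f (v 0) (v 1)
  map_update_add' := by
    intro inst v i x y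
    obtain rfl : inst = instDecidableEqFin 2 := Subsingleton.elim _ _
    fin_cases i <;> simp [Function.update]
  map_update_smul' := by
    intro inst v i c x
    obtain rfl : inst = instDecidableEqFin 2 := Subsingleton.elim _ _
    fin_cases i <;> simp [Function.update]
  map_eq_zero_of_eq' := by
    intro v i j h hij
    fin_cases i <;> fin_cases j <;> simp_all

/-- The linear map on the second exterior power induced by an alternating bilinear map. -/
noncomputable def lift2 (f : M →ₗ[ℤ] M →ₗ[ℤ] N) (hf : ∀ x, f x x = 0) : ⋀[ℤ]^2 M →ₗ[ℤ] N :=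
  exteriorPower.alternatingMapLinearEquiv (alt2 f hf)

lemma lift2_apply (f : M →ₗ[ℤ] M →ₗ[ℤ] N) (hf : ∀ x, f x x = 0) (x y : M) :
    lift2 f hf (wedge2 x y) = f x y :=
  exteriorPower.alternatingMapLinearEquiv_apply_ιMulti (alt2 f hf) ![x, y]

lemma ext2 {f g : ⋀[ℤ]^2 M →ₗ[ℤ] N} (h : ∀ x y, f (wedge2 x y) = g (wedge2 x y)) : f = g := by
  apply exteriorPower.linearMap_ext
  ext v
  have hv : v = ![v 0, v 1] := by ext i; fin_cases i <;> rfl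
  rw [hv]
  exact h _ _

lemma ext3 {f g : ⋀[ℤ]^3 M →ₗ[ℤ] N} (h : ∀ x y z, f (wedge3 x y z) = g (wedge3 x y z)) :
    f = g := by
  apply exteriorPower.linearMap_ext
  ext v
  have hv : v = ![v 0, v 1, v 2] := by ext i; fin_cases i <;> rfl
  rw [hv]
  exact h _ _ _

/-- The alternating map underlying `ν`. -/
noncomputable def nuAlt (M : Type*) [AddCommGroup M] : M [⋀^Fin 3]→ₗ[ℤ] M ⊗[ℤ] ⋀[ℤ]^2 M where
  toFun v := v 0 ⊗ₜ wedgeB M (v 1) (v 2) + v 1 ⊗ₜ wedgeB M (v 2) (v 0)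
    + v 2 ⊗ₜ wedgeB M (v 0) (v 1)
  map_update_add' := by
    intro inst v i x y
    obtain rfl : inst = instDecidableEqFin 3 := Subsingleton.elim _ _
    fin_cases i <;> simp [Function.update, TensorProduct.add_tmul, TensorProduct.tmul_add] <;> abel
  map_update_smul' := by
    intro inst v i c x
    obtain rfl : inst = instDecidableEqFin 3 := Subsingleton.elim _ _
    fin_cases i <;> simp [Function.update, TensorProduct.smul_tmul']
  map_eq_zero_of_eq' := by
    intro v i j h hij
    have key : ∀ a b : M, a ⊗ₜ[ℤ] (wedge2 a b : ⋀[ℤ]^2 M) + a ⊗ₜ wedge2 b a = 0 := by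
      intro a b
      rw [wedge2_swap a b, ← TensorProduct.tmul_add, neg_add_cancel, TensorProduct.tmul_zero]
    have keyb : ∀ a b : M, a ⊗ₜ[ℤ] (wedge2 b a : ⋀[ℤ]^2 M) + a ⊗ₜ wedge2 a b = 0 := by
      intro a b
      rw [wedge2_swap a b, ← TensorProduct.tmul_add, add_neg_cancel, TensorProduct.tmul_zero]
    fin_cases i <;> fin_cases j <;> simp_all [wedgeB_apply, wedge2_self]

/-- The map `ν`. -/
noncomputable def nuL (M : Type*) [AddCommGroup M] : ⋀[ℤ]^3 M →ₗ[ℤ] M ⊗[ℤ] ⋀[ℤ]^2 M :=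
  exteriorPower.alternatingMapLinearEquiv (nuAlt M)

lemma nuL_apply (x y z : M) : nuL M (wedge3 x y z)
    = x ⊗ₜ wedge2 y z + y ⊗ₜ wedge2 z x + z ⊗ₜ wedge2 x y :=
  exteriorPower.alternatingMapLinearEquiv_apply_ιMulti (nuAlt M) ![x, y, z]

lemma nuL_injective (M : Type*) [AddCommGroup M] [Module.Free ℤ M] :
    Function.Injective (nuL M) := by
  let m : M ⊗[ℤ] ⋀[ℤ]^2 M →ₗ[ℤ] ExteriorAlgebra ℤ M :=
    LinearMap.mul' ℤ (ExteriorAlgebra ℤ M) ∘ₗ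
      TensorProduct.map (ι ℤ) (Submodule.subtype _)
  have hm : m ∘ₗ nuL M = (3 : ℤ) • Submodule.subtype _ := by
    apply ext3
    intro x y z
    have hs : ∀ a b : M, ι ℤ a * ι ℤ b = - (ι ℤ b * ι ℤ a) := fun a b =>
      eq_neg_of_add_eq_zero_left (ExteriorAlgebra.ι_add_mul_swap a b)
    have h1 : ι ℤ y * (ι ℤ z * ι ℤ x) = ι ℤ x * (ι ℤ y * ι ℤ z) := by
      rw [hs z x, mul_neg, ← mul_assoc, hs y x, neg_mul, neg_neg, mul_assoc]
    have h2 : ι ℤ z * (ι ℤ x * ι ℤ y) = ι ℤ x * (ι ℤ y * ι ℤ z) := by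
      rw [← mul_assoc, hs z x, neg_mul, mul_assoc, hs z y, mul_neg, neg_neg]
    have hmt : ∀ a b c : M, m (a ⊗ₜ wedge2 b c) = ι ℤ a * (ι ℤ b * ι ℤ c) := by
      intro a b c
      rw [← coe_wedge2]
      rfl
    rw [LinearMap.comp_apply, nuL_apply, map_add, map_add, hmt, hmt, hmt, h1, h2,
      LinearMap.smul_apply, Submodule.subtype_apply, coe_wedge3]
    abel
  rw [injective_iff_map_eq_zero]
  intro u hu
  have h := LinearMap.congr_fun hm u
  rw [LinearMap.comp_apply, hu, map_zero] at h
  have h3 : (3 : ℤ) • u = 0 := Subtype.ext h.symm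
  have : Module.Free ℤ (⋀[ℤ]^3 M) := inferInstance
  exact (smul_eq_zero.mp h3).resolve_left (by norm_num)

variable {κ : Type*} (b : Module.Basis κ ℤ M)

/-- The coordinates on the second exterior power. -/
noncomputable def coord2 (j k : κ) : ⋀[ℤ]^2 M →ₗ[ℤ] ℤ :=
  lift2 ((LinearMap.mul ℤ ℤ).compl₁₂ (b.coord j) (b.coord k)
    - (LinearMap.mul ℤ ℤ).compl₁₂ (b.coord k) (b.coord j)) (by
      intro x; simp [mul_comm])

lemma coord2_apply (j k : κ) (x y : M) :
    coord2 b j k (wedge2 x y) = b.repr x j * b.repr y k - b.repr x k * b.repr y j := by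
  simp [coord2, lift2_apply]

/-- The coordinates on `M ⊗ Λ²M`. -/
noncomputable def coord3 (i j k : κ) : M ⊗[ℤ] ⋀[ℤ]^2 M →ₗ[ℤ] ℤ :=
  TensorProduct.lift ((LinearMap.mul ℤ ℤ).compl₁₂ (b.coord i) (coord2 b j k))

lemma coord3_apply (i j k : κ) (h x y : M) : coord3 b i j k (h ⊗ₜ wedge2 x y) =
    b.repr h i * (b.repr x j * b.repr y k - b.repr x k * b.repr y j) := by
  rw [← coord2_apply]
  rfl

lemma tens_ext {f g : M ⊗[ℤ] ⋀[ℤ]^2 M →ₗ[ℤ] N}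
    (h : ∀ h x y, f (h ⊗ₜ wedge2 x y) = g (h ⊗ₜ wedge2 x y)) : f = g := by
  apply TensorProduct.ext
  ext1 z
  apply ext2
  intro x y
  exact h z x y

lemma coord3_swap (i j k : κ) (w : M ⊗[ℤ] ⋀[ℤ]^2 M) : coord3 b i j k w = - coord3 b i k j w := by
  have : coord3 b i j k = - coord3 b i k j := by
    apply tens_ext
    intro h x y
    simp only [LinearMap.neg_apply, coord3_apply]
    ring
  exact LinearMap.congr_fun this w

lemma recon [Fintype κ] [LinearOrder κ] (w : M ⊗[ℤ] ⋀[ℤ]^2 M) :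
    w = ∑ i, ∑ j, ∑ k, if j < k then
      coord3 b i j k w • (b i ⊗ₜ[ℤ] (wedge2 (b j) (b k) : ⋀[ℤ]^2 M)) else 0 := by
  let F : M ⊗[ℤ] ⋀[ℤ]^2 M →ₗ[ℤ] M ⊗[ℤ] ⋀[ℤ]^2 M :=
    ∑ i, ∑ j, ∑ k, if j < k then
      (coord3 b i j k).smulRight (b i ⊗ₜ[ℤ] (wedge2 (b j) (b k) : ⋀[ℤ]^2 M)) else 0
  have hF : LinearMap.id = F := by
    apply tens_ext
    intro h x y
    have h2 : (wedge2 x y : ⋀[ℤ]^2 M) = ∑ j, ∑ k, if j < k then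
        (b.repr x j * b.repr y k - b.repr x k * b.repr y j) •
          (wedge2 (b j) (b k) : ⋀[ℤ]^2 M) else 0 := by
      have e1 : (wedge2 x y : ⋀[ℤ]^2 M) = ∑ j, ∑ k, (b.repr x j * b.repr y k) •
          (wedge2 (b j) (b k) : ⋀[ℤ]^2 M) := by
        conv_lhs => rw [← wedgeB_apply, ← b.sum_repr x, ← b.sum_repr y]
        simp only [map_sum, LinearMap.sum_apply, map_smul, LinearMap.smul_apply, wedgeB_apply,
          Finset.smul_sum, smul_smul]
        rw [Finset.sum_comm]
        simp only [mul_comm]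
      have e2 : (∑ j, ∑ k, if j < k then
          (b.repr x k * b.repr y j) • (wedge2 (b j) (b k) : ⋀[ℤ]^2 M) else 0)
          = ∑ j, ∑ k, if k < j then
          -((b.repr x j * b.repr y k) • (wedge2 (b j) (b k) : ⋀[ℤ]^2 M)) else 0 := by
        rw [Finset.sum_comm]
        refine Finset.sum_congr rfl fun j _ => Finset.sum_congr rfl fun k _ => ?_
        rw [wedge2_swap (b j) (b k), smul_neg, neg_neg]
      have e3 : (∑ j, ∑ k, if j < k then
        (b.repr x j * b.repr y k - b.repr x k * b.repr y j) •
          (wedge2 (b j) (b k) : ⋀[ℤ]^2 M) else 0) =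
          (∑ j, ∑ k, if j < k then
            (b.repr x j * b.repr y k) • (wedge2 (b j) (b k) : ⋀[ℤ]^2 M) else 0) -
          (∑ j, ∑ k, if j < k then
            (b.repr x k * b.repr y j) • (wedge2 (b j) (b k) : ⋀[ℤ]^2 M) else 0) := by
        simp only [← Finset.sum_sub_distrib]
        refine Finset.sum_congr rfl fun j _ => Finset.sum_congr rfl fun k _ => ?_
        split_ifs <;> simp [sub_smul]
      rw [e1, e3, e2]
      simp only [← Finset.sum_sub_distrib]
      refine Finset.sum_congr rfl fun j _ => Finset.sum_congr rfl fun k _ => ?_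
      rcases lt_trichotomy j k with hjk | rfl | hjk
      · simp [hjk, hjk.not_gt]
      · simp [wedge2_self]
      · simp [hjk, hjk.not_gt]
    simp only [F, LinearMap.id_apply, LinearMap.sum_apply]
    conv_lhs => rw [← b.sum_repr h, h2]
    rw [TensorProduct.sum_tmul]
    refine Finset.sum_congr rfl fun i _ => ?_
    rw [TensorProduct.tmul_sum]
    refine Finset.sum_congr rfl fun j _ => ?_
    rw [TensorProduct.tmul_sum]
    refine Finset.sum_congr rfl fun k _ => ?_
    split_ifs
    · simp only [LinearMap.smulRight_apply, coord3_apply, TensorProduct.smul_tmul_smul]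
    · simp
  have := LinearMap.congr_fun hF w
  rw [LinearMap.id_apply] at this
  conv_lhs => rw [this]
  simp only [F, LinearMap.sum_apply]
  refine Finset.sum_congr rfl fun i _ => Finset.sum_congr rfl fun j _ =>
      Finset.sum_congr rfl fun k _ => ?_
  split_ifs <;> simp

lemma mem_range_nuL [Fintype κ] (w : M ⊗[ℤ] ⋀[ℤ]^2 M)
    (hw : ∀ i j k, coord3 b i j k w = coord3 b k i j w) : w ∈ LinearMap.range (nuL M) := by
  classical
  let _ : LinearOrder κ := linearOrderOfSTO WellOrderingRel
  let F : κ → κ → κ → M ⊗[ℤ] ⋀[ℤ]^2 M := fun i j k =>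
    coord3 b i j k w • (b i ⊗ₜ[ℤ] (wedge2 (b j) (b k) : ⋀[ℤ]^2 M))
  have Fs : ∀ i j k, F i j k = F i k j := by
    intro i j k
    simp only [F]
    rw [coord3_swap b i j k, wedge2_swap (b j) (b k), TensorProduct.tmul_neg, smul_neg, neg_smul,
      neg_neg]
  have c0 : ∀ i j, coord3 b i j j w = 0 := by
    intro i j
    have := coord3_swap b i j j w
    omega
  have F1 : ∀ i k, F i i k = 0 := by
    intro i k
    simp only [F]
    rw [hw, c0, zero_smul]
  have F2 : ∀ i k, F i k i = 0 := by
    intro i k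
    rw [Fs, F1]
  refine ⟨∑ i, ∑ j, ∑ k, if i < j ∧ j < k then coord3 b i j k w • wedge3 (b i) (b j) (b k) else 0,
    ?_⟩
  have hterm : ∀ i j k, nuL M (if i < j ∧ j < k then
      coord3 b i j k w • wedge3 (b i) (b j) (b k) else 0)
      = (if i < j ∧ j < k then F i j k else 0) + (if i < j ∧ j < k then F j i k else 0)
        + (if i < j ∧ j < k then F k i j else 0) := by
    intro i j k
    split_ifs
    · rw [map_smul, nuL_apply, Fs j i k]
      simp only [F, smul_add]
      rw [hw j k i, ← hw i j k]
    · simp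
  simp only [map_sum, hterm, Finset.sum_add_distrib]
  have s2 : (∑ i, ∑ j, ∑ k, if i < j ∧ j < k then F j i k else 0)
      = ∑ i, ∑ j, ∑ k, if j < i ∧ i < k then F i j k else 0 := Finset.sum_comm
  have s3 : (∑ i, ∑ j, ∑ k, if i < j ∧ j < k then F k i j else 0)
      = ∑ i, ∑ j, ∑ k, if j < k ∧ k < i then F i j k else 0 := by
    rw [Finset.sum_congr rfl fun i _ => Finset.sum_comm]
    rw [Finset.sum_comm]
  rw [s2, s3]
  conv_rhs => rw [recon b w]
  simp only [← Finset.sum_add_distrib]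
  refine Finset.sum_congr rfl fun i _ => Finset.sum_congr rfl fun j _ =>
      Finset.sum_congr rfl fun k _ => ?_
  change _ = if j < k then F i j k else 0
  rcases eq_or_ne i j with rfl | hij
  · simp [F1]
  rcases eq_or_ne i k with rfl | hik
  · simp [F2]
  by_cases hjk : j < k
  · rcases lt_or_gt_of_ne hij with h1 | h1
    · simp [hjk, h1, h1.not_gt, (h1.trans hjk).not_gt]
    · rcases lt_or_gt_of_ne hik with h2 | h2
      · simp [hjk, h1, h1.not_gt, h2, h2.not_gt]
      · simp [hjk, h1, h1.not_gt, h2, h2.not_gt]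
  · have : ¬ (j < i ∧ i < k) := fun h => hjk (h.1.trans h.2)
    simp [hjk, this]

/-- The bracketing map. -/
noncomputable def brkL {L : Type*} [LieRing L] (l : M →ₗ[ℤ] L) : M ⊗[ℤ] ⋀[ℤ]^2 M →ₗ[ℤ] L :=
  TensorProduct.lift ((LieModule.toEnd ℤ L L : L →ₗ[ℤ] L →ₗ[ℤ] L).compl₁₂ l
    (lift2 ((LieModule.toEnd ℤ L L : L →ₗ[ℤ] L →ₗ[ℤ] L).compl₁₂ l l) (by intro x; simp)))

lemma brkL_apply {L : Type*} [LieRing L] (l : M →ₗ[ℤ] L) (h x y : M) :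
    brkL l (h ⊗ₜ wedge2 x y) = ⁅l h, ⁅l x, l y⁆⁆ := by
  have e : ⁅l x, l y⁆ = lift2 ((LieModule.toEnd ℤ L L : L →ₗ[ℤ] L →ₗ[ℤ] L).compl₁₂ l l)
      (by intro x; simp) (wedge2 x y) := by
    rw [lift2_apply]
    rfl
  rw [e]
  rfl

/-- Superdiagonal matrices, used to detect coefficients of words of length three. -/
def supM (a b c : ℤ) : Matrix (Fin 4) (Fin 4) ℤ :=
  !![0, a, 0, 0; 0, 0, b, 0; 0, 0, 0, c; 0, 0, 0, 0]

attribute [local instance] LieRing.ofAssociativeRing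

lemma supM_bracket (a b c a₂ b₂ c₂ a₃ b₃ c₃ : ℤ) :
    (⁅supM a b c, ⁅supM a₂ b₂ c₂, supM a₃ b₃ c₃⁆⁆ : Matrix (Fin 4) (Fin 4) ℤ) 0 3
      = a * (b₂ * c₃ - c₂ * b₃) - c * (a₂ * b₃ - b₂ * a₃) := by
  simp [supM, Ring.lie_def, Matrix.mul_apply, Fin.sum_univ_four]
  ring

/-- `supM` as a linear map in coordinates. -/
def supL {I : Type*} (i j k : I) : (I → ℤ) →ₗ[ℤ] Matrix (Fin 4) (Fin 4) ℤ where
  toFun h := supM (h i) (h j) (h k)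
  map_add' x y := by
    ext p q; fin_cases p <;> fin_cases q <;> simp [supM]
  map_smul' r x := by
    ext p q; fin_cases p <;> fin_cases q <;> simp [supM]

lemma coord3_cyclic (g : ℕ) (w : Hgrp g ⊗[ℤ] ⋀[ℤ]^2 (Hgrp g)) (hw : brkL (linH g) w = 0)
    (i j k : Fin g ⊕ Fin g) : coord3 (Pi.basisFun ℤ (Fin g ⊕ Fin g)) i j k w =
      coord3 (Pi.basisFun ℤ (Fin g ⊕ Fin g)) k i j w := by
  let Φ : FreeLie g →ₗ⁅ℤ⁆ Matrix (Fin 4) (Fin 4) ℤ :=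
    FreeLieAlgebra.lift ℤ (fun a => supL i j k (Pi.basisFun ℤ (Fin g ⊕ Fin g) a))
  have hΦ : ∀ h, Φ (linH g h) = supL i j k h := by
    have : (Φ : FreeLie g →ₗ[ℤ] Matrix (Fin 4) (Fin 4) ℤ) ∘ₗ linH g = supL i j k := by
      apply (Pi.basisFun ℤ (Fin g ⊕ Fin g)).ext
      intro a
      rw [LinearMap.comp_apply, linH, Module.Basis.constr_basis]
      exact FreeLieAlgebra.lift_of_apply _ _
    exact fun h => LinearMap.congr_fun this h
  let ev : Matrix (Fin 4) (Fin 4) ℤ →ₗ[ℤ] ℤ := Matrix.entryLinearMap ℤ ℤ 0 3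
  have key : ev ∘ₗ (Φ : FreeLie g →ₗ[ℤ] Matrix (Fin 4) (Fin 4) ℤ) ∘ₗ brkL (linH g)
      = coord3 (Pi.basisFun ℤ (Fin g ⊕ Fin g)) i j k
        - coord3 (Pi.basisFun ℤ (Fin g ⊕ Fin g)) k i j := by
    apply tens_ext
    intro h x y
    rw [LinearMap.comp_apply, LinearMap.comp_apply, brkL_apply, LinearMap.sub_apply, coord3_apply,
      coord3_apply]
    have : (Φ : FreeLie g →ₗ[ℤ] Matrix (Fin 4) (Fin 4) ℤ) ⁅linH g h, ⁅linH g x, linH g y⁆⁆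
        = ⁅supL i j k h, ⁅supL i j k x, supL i j k y⁆⁆ := by
      rw [← hΦ, ← hΦ, ← hΦ, ← LieHom.map_lie, ← LieHom.map_lie]
      rfl
    rw [this]
    exact supM_bracket _ _ _ _ _ _ _ _ _
  have := LinearMap.congr_fun key w
  rw [LinearMap.comp_apply, LinearMap.comp_apply, hw, map_zero, map_zero,
    LinearMap.sub_apply] at this
  omega

end Aux

/-- The map `ν : Λ³H → H ⊗ L₂(H)` (with `L₂(H) ≅ Λ²H`),
`ν(x∧y∧z) = x⊗[y,z] + y⊗[z,x] + z⊗[x,y]`, is well defined and injective, and the sequence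
`0 → Λ³H → H ⊗ L₂(H) → L₃(H)` is exact at the first two spots, where the second map is the
bracketing map `h ⊗ u ↦ [h,u]` into the free Lie ring. -/
theorem nu_injective_and_exact (g : ℕ) :
    ∃ (ν : ⋀[ℤ]^3 (Hgrp g) →ₗ[ℤ] Hgrp g ⊗[ℤ] ⋀[ℤ]^2 (Hgrp g))
      (brk : Hgrp g ⊗[ℤ] ⋀[ℤ]^2 (Hgrp g) →ₗ[ℤ] FreeLie g),
      (∀ x y z : Hgrp g, ν (wedge3 x y z)
          = x ⊗ₜ wedge2 y z + y ⊗ₜ wedge2 z x + z ⊗ₜ wedge2 x y) ∧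
      (∀ (h x y : Hgrp g), brk (h ⊗ₜ wedge2 x y)
          = ⁅linH g h, ⁅linH g x, linH g y⁆⁆) ∧
      Function.Injective ν ∧
      (∀ w, brk (ν w) = 0) ∧
      LinearMap.range ν = LinearMap.ker brk := by
  have hz : ∀ w, brkL (linH g) (nuL (Hgrp g) w) = 0 := by
    have : brkL (linH g) ∘ₗ nuL (Hgrp g) = 0 := by
      apply ext3
      intro x y z
      rw [LinearMap.comp_apply, nuL_apply, map_add, map_add, brkL_apply, brkL_apply, brkL_apply]
      exact lie_jacobi _ _ _
    exact fun w => LinearMap.congr_fun this w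
  refine ⟨nuL _, brkL (linH g), nuL_apply, brkL_apply _, nuL_injective _, hz, ?_⟩
  apply le_antisymm
  · rintro _ ⟨w, rfl⟩
    exact hz w
  · intro w hw
    exact mem_range_nuL (Pi.basisFun ℤ (Fin g ⊕ Fin g)) w (coord3_cyclic g w hw)
end
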